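/- For every integer m ≥ 1, the 2-alternating assignment with m blocks on the 1×(2m+1) strip of stamps folds in exactly C_{⌊m/2⌋+1} · C_{⌈m/2⌉+1} ways, where C_i denotes the i-th Catalan number; that is, the number of valid layer orderings for this assignment equals C_{⌊m/2⌋+1} · C_{⌈m/2⌉+1}. -/

import Mathlib

/-- A crease direction: mountain or valley. -/
inductive MV : Type
  | M : MV
  | V : MV
deriving DecidableEq

/-- The value `σ(i)` of a layer ordering at face `i`, as a natural number
(`0` if `i` is out of range). -/
def faceVal {n : ℕ} (σ : Equiv.Perm (Fin n)) (i : ℕ) : ℕ :=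
  if h : i < n then (σ ⟨i, h⟩ : Fin n) else 0

/-- Condition (1): the layer ordering respects the mountain–valley assignment. -/
def MVRelations (n : ℕ) (μ : ℕ → MV) (σ : Equiv.Perm (Fin n)) : Prop :=
  ∀ i, i + 1 < n →
    if (μ i = MV.M ∧ Even i) ∨ (μ i = MV.V ∧ Odd i)
    then faceVal σ (i + 1) < faceVal σ i
    else faceVal σ i < faceVal σ (i + 1)

/-- `x` lies strictly between `lo` and `hi` (in either order). -/
def StrictlyBetween (x a b : ℕ) : Prop := min a b < x ∧ x < max a b

/-- Condition (2): no two creases on the same side cross. -/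
def NoCrossings (n : ℕ) (σ : Equiv.Perm (Fin n)) : Prop :=
  ∀ i j, i + 1 < n → j + 1 < n → i % 2 = j % 2 →
    ¬ Xor' (StrictlyBetween (faceVal σ j) (faceVal σ i) (faceVal σ (i + 1)))
           (StrictlyBetween (faceVal σ (j + 1)) (faceVal σ i) (faceVal σ (i + 1)))

/-- A valid layer ordering for the MV assignment `μ` on the `1 × n` strip. -/
def ValidLayerOrdering (n : ℕ) (μ : ℕ → MV) (σ : Equiv.Perm (Fin n)) : Prop :=
  MVRelations n μ σ ∧ NoCrossings n σ

/-- `c(μ)`: the number of valid layer orderings for `μ` on the `1 × n` strip. -/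
noncomputable def foldCount (n : ℕ) (μ : ℕ → MV) : ℕ :=
  Nat.card {σ : Equiv.Perm (Fin n) // ValidLayerOrdering n μ σ}

/-- The 2-alternating assignment: crease `(k,k+1)` is `M` if `⌊k/2⌋` is even, `V` otherwise. -/
def twoAlt : ℕ → MV := fun k => if Even (k / 2) then MV.M else MV.V


namespace Fold

/-- strict betweenness -/
def SB (x a b : ℕ) : Prop := (a < x ∧ x < b) ∨ (b < x ∧ x < a)

/-- validity of a position function, for the reading direction of parity `s` -/
structure OV (m s : ℕ) (f : ℕ → ℕ) : Prop where
  lo : ∀ j, j < m → (j + s) % 2 = 0 → f (2*j+1) < f (2*j) ∧ f (2*j+1) < f (2*j+2)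
  hi : ∀ j, j < m → (j + s) % 2 = 1 → f (2*j) < f (2*j+1) ∧ f (2*j+2) < f (2*j+1)
  nc1 : ∀ i j, i < m → j < m → i ≠ j →
    (SB (f (2*j)) (f (2*i)) (f (2*i+1)) ↔ SB (f (2*j+1)) (f (2*i)) (f (2*i+1)))
  nc2 : ∀ i j, i < m → j < m → i ≠ j →
    (SB (f (2*j+1)) (f (2*i+1)) (f (2*i+2)) ↔ SB (f (2*j+2)) (f (2*i+1)) (f (2*i+2)))

theorem OV.flip {m s t N : ℕ} {f g : ℕ → ℕ} (h : OV m s f) (hs : (s + 1) % 2 = t % 2)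
    (hg : ∀ x, x < 2*m+1 → f x ≤ N ∧ g x = N - f x) : OV m t g := by
  constructor
  · intro j hj hp
    have := h.hi j hj (by omega)
    have h0 := hg (2*j) (by omega)
    have h1 := hg (2*j+1) (by omega)
    have h2 := hg (2*j+2) (by omega)
    omega
  · intro j hj hp
    have := h.lo j hj (by omega)
    have h0 := hg (2*j) (by omega)
    have h1 := hg (2*j+1) (by omega)
    have h2 := hg (2*j+2) (by omega)
    omega
  · intro i j hi hj hij
    have := h.nc1 i j hi hj hij
    have h0 := hg (2*j) (by omega)
    have h1 := hg (2*j+1) (by omega)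
    have h2 := hg (2*i) (by omega)
    have h3 := hg (2*i+1) (by omega)
    simp only [SB] at *
    omega
  · intro i j hi hj hij
    have := h.nc2 i j hi hj hij
    have h0 := hg (2*j+1) (by omega)
    have h1 := hg (2*j+2) (by omega)
    have h2 := hg (2*i+1) (by omega)
    have h3 := hg (2*i+2) (by omega)
    simp only [SB] at *
    omega

/-- `g` arises from `f` by inserting a point at gap `a` and a point at gap `b`. -/
def Ins (m a b : ℕ) (f g : ℕ → ℕ) : Prop :=
  ∀ x, x < 2*m+1 → (f x < a ∧ g x = f x) ∨ (a ≤ f x ∧ f x < b ∧ g x = f x + 1) ∨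
    (b ≤ f x ∧ g x = f x + 2)

theorem Ins.mono {m a b : ℕ} {f g : ℕ → ℕ} (hab : a ≤ b) (hg : Ins m a b f g) {x y : ℕ}
    (hx : x < 2*m+1) (hy : y < 2*m+1) : f x < f y ↔ g x < g y := by
  have h1 := hg x hx
  have h2 := hg y hy
  omega

theorem Ins.sb {m a b : ℕ} {f g : ℕ → ℕ} (hab : a ≤ b) (hg : Ins m a b f g) {x y z : ℕ}
    (hx : x < 2*m+1) (hy : y < 2*m+1) (hz : z < 2*m+1) :
    SB (g x) (g y) (g z) ↔ SB (f x) (f y) (f z) := by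
  simp only [SB, hg.mono hab hx hy, hg.mono hab hx hz, hg.mono hab hy hx, hg.mono hab hz hx]

set_option maxHeartbeats 1000000 in
theorem OV.insert {m a b : ℕ} {f g : ℕ → ℕ} (h : OV m m f)
    (hinj : ∀ x y, x < 2*m+1 → y < 2*m+1 → f x = f y → x = y)
    (ha : f (2*m) = a) (hab : a ≤ b) (hg : Ins m a b f g)
    (hO : g (2*m+1) = a) (hE : g (2*m+2) = b + 1)
    (hcl : ∀ j, j < m → ((a ≤ f (2*j+1) ∧ f (2*j+1) < b) ↔ (a ≤ f (2*j+2) ∧ f (2*j+2) < b))) :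
    OV (m+1) m g := by
  have key : ∀ x, x < 2*m → f x ≠ a := by
    intro x hx he
    have := hinj x (2*m) (by omega) (by omega) (by omega)
    omega
  have hm := hg (2*m) (by omega)
  constructor
  · intro j hj hp
    rcases Nat.lt_succ_iff_lt_or_eq.mp hj with hj | rfl
    · have := h.lo j hj (by omega)
      have h0 := hg (2*j) (by omega)
      have h1 := hg (2*j+1) (by omega)
      have h2 := hg (2*j+2) (by omega)
      omega
    · omega
  · intro j hj hp
    rcases Nat.lt_succ_iff_lt_or_eq.mp hj with hj | rfl
    · have := h.hi j hj (by omega)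
      have h0 := hg (2*j) (by omega)
      have h1 := hg (2*j+1) (by omega)
      have h2 := hg (2*j+2) (by omega)
      omega
    · omega
  · intro i j hi hj hij
    rcases Nat.lt_succ_iff_lt_or_eq.mp hi with hi | rfl
    · have h2 := hg (2*i) (by omega)
      have h3 := hg (2*i+1) (by omega)
      rcases Nat.lt_succ_iff_lt_or_eq.mp hj with hj | rfl
      · rw [hg.sb hab (by omega) (by omega) (by omega), hg.sb hab (by omega) (by omega) (by omega)]
        exact h.nc1 i j hi hj hij
      · have k2 := key (2*i) (by omega)
        have k3 := key (2*i+1) (by omega)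
        simp only [SB] at *
        omega
    · have hj : j < i := by omega
      have h0 := hg (2*j) (by omega)
      have h1 := hg (2*j+1) (by omega)
      have k2 := key (2*j) (by omega)
      have k3 := key (2*j+1) (by omega)
      simp only [SB] at *
      omega
  · intro i j hi hj hij
    rcases Nat.lt_succ_iff_lt_or_eq.mp hi with hi | rfl
    · have h2 := hg (2*i+1) (by omega)
      have h3 := hg (2*i+2) (by omega)
      rcases Nat.lt_succ_iff_lt_or_eq.mp hj with hj | rfl
      · rw [hg.sb hab (by omega) (by omega) (by omega), hg.sb hab (by omega) (by omega) (by omega)]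
        exact h.nc2 i j hi hj hij
      · have k := hcl i hi
        simp only [SB] at *
        omega
    · have hj : j < i := by omega
      have h0 := hg (2*j+1) (by omega)
      have h1 := hg (2*j+2) (by omega)
      have k := hcl j hj
      simp only [SB] at *
      omega

theorem OV.restrict {m a b : ℕ} {f g : ℕ → ℕ} (h : OV (m+1) m g)
    (hab : a ≤ b) (hg : Ins m a b f g)
    (hO : g (2*m+1) = a) (hE : g (2*m+2) = b + 1) :
    OV m m f ∧ a ≤ f (2*m) ∧
    (∀ j, j < m → ((a ≤ f (2*j+1) ∧ f (2*j+1) < b) ↔ (a ≤ f (2*j+2) ∧ f (2*j+2) < b))) := by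
  refine ⟨⟨?_, ?_, ?_, ?_⟩, ?_, ?_⟩
  · intro j hj hp
    have := h.lo j (by omega) (by omega)
    have h0 := hg (2*j) (by omega)
    have h1 := hg (2*j+1) (by omega)
    have h2 := hg (2*j+2) (by omega)
    omega
  · intro j hj hp
    have := h.hi j (by omega) (by omega)
    have h0 := hg (2*j) (by omega)
    have h1 := hg (2*j+1) (by omega)
    have h2 := hg (2*j+2) (by omega)
    omega
  · intro i j hi hj hij
    rw [← hg.sb hab (by omega) (by omega) (by omega), ← hg.sb hab (by omega) (by omega) (by omega)]
    exact h.nc1 i j (by omega) (by omega) hij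
  · intro i j hi hj hij
    rw [← hg.sb hab (by omega) (by omega) (by omega), ← hg.sb hab (by omega) (by omega) (by omega)]
    exact h.nc2 i j (by omega) (by omega) hij
  · have := h.lo m (by omega) (by omega)
    have h0 := hg (2*m) (by omega)
    omega
  · intro j hj
    have := h.nc2 m j (by omega) (by omega) (by omega)
    have h0 := hg (2*j+1) (by omega)
    have h1 := hg (2*j+2) (by omega)
    simp only [SB] at *
    omega

/-- a list closed under the odd-crease partner -/
def Closed (P : List ℕ) : Prop := ∀ j, 2*j+1 ∈ P ↔ 2*j+2 ∈ P

inductive Reach : ℕ → List ℕ → List ℕ → Prop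
  | zero : Reach 0 [0] []
  | step {m : ℕ} {P1 P2 Q : List ℕ} : Reach m (P1 ++ P2) Q → Closed P1 →
      Reach (m+1) ((2*m+2) :: (P1.reverse ++ (2*m+1) :: Q)) P2

structure Valid (m : ℕ) (P Q : List ℕ) : Prop where
  nodup : (Q.reverse ++ P).Nodup
  mem : ∀ x, x ∈ Q.reverse ++ P ↔ x < 2*m+1
  ov : OV m m (fun x => (Q.reverse ++ P).idxOf x)
  head : ∃ P', P = (2*m) :: P'

theorem ins_lists {m : ℕ} {Q P1 P2 : List ℕ}
    (hn : (Q.reverse ++ (P1 ++ P2)).Nodup) (hmem : ∀ x, x ∈ Q.reverse ++ (P1 ++ P2) ↔ x < 2*m+1) :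
    Ins m Q.length (Q.length + P1.length) (fun x => (Q.reverse ++ (P1 ++ P2)).idxOf x)
      (fun x => (Q.reverse ++ (2*m+1) :: (P1 ++ (2*m+2) :: P2)).idxOf x) := by
  intro x hx
  have hx' := (hmem x).2 hx
  simp only [List.idxOf_append, List.idxOf_cons, List.mem_append, List.mem_reverse, List.length_reverse] at *
  have e1 : ((2*m+1) == x) = false := by simp; omega
  have e2 : ((2*m+2) == x) = false := by simp; omega
  simp only [e1, e2]
  by_cases hq : x ∈ Q
  · have := List.idxOf_lt_length_of_mem (List.mem_reverse.2 hq)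
    simp only [List.length_reverse] at this
    simp [hq]; omega
  · by_cases h1 : x ∈ P1
    · have := List.idxOf_lt_length_of_mem h1
      simp [hq, h1]; omega
    · simp [hq, h1]; omega

theorem idxOf_rev {l : List ℕ} (hl : l.Nodup) {x : ℕ} (hx : x ∈ l) :
    l.idxOf x ≤ l.length - 1 ∧ l.reverse.idxOf x = l.length - 1 - l.idxOf x := by
  have h := List.idxOf_lt_length_of_mem hx
  refine ⟨by omega, ?_⟩
  have h2 : l.length - 1 - l.idxOf x < l.reverse.length := by simp; omega
  have := (List.nodup_reverse.2 hl).idxOf_getElem (l.length - 1 - l.idxOf x) h2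
  rw [← this]
  congr 1
  rw [List.getElem_reverse]
  have e : l.length - 1 - (l.length - 1 - l.idxOf x) = l.idxOf x := by omega
  simp [e]

theorem len_of {n : ℕ} {l : List ℕ} (hl : l.Nodup) (hm : ∀ x, x ∈ l ↔ x < n) : l.length = n := by
  have : l.Perm (List.range n) := (List.perm_ext_iff_of_nodup hl List.nodup_range).2 (by simpa using hm)
  simpa using this.length_eq

theorem rev_child (m : ℕ) (P1 P2 Q : List ℕ) :
    P2.reverse ++ (2*m+2) :: (P1.reverse ++ (2*m+1) :: Q) =
      (Q.reverse ++ (2*m+1) :: (P1 ++ (2*m+2) :: P2)).reverse := by simp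

theorem nodup_child {m : ℕ} {P1 P2 Q : List ℕ} :
    ((Q.reverse ++ (2*m+1) :: (P1 ++ (2*m+2) :: P2)).Nodup ∧
      ∀ x, x ∈ (Q.reverse ++ (2*m+1) :: (P1 ++ (2*m+2) :: P2)) ↔ x < 2*(m+1)+1) ↔
    ((Q.reverse ++ (P1 ++ P2)).Nodup ∧ ∀ x, x ∈ (Q.reverse ++ (P1 ++ P2)) ↔ x < 2*m+1) := by
  have hp : (Q.reverse ++ (2*m+1) :: (P1 ++ (2*m+2) :: P2)).Perm
      ((2*m+1) :: (2*m+2) :: (Q.reverse ++ (P1 ++ P2))) := by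
    refine List.perm_middle.trans (List.Perm.cons _ ?_)
    rw [← List.append_assoc]
    refine List.perm_middle.trans (List.Perm.cons _ ?_)
    rw [List.append_assoc]
  rw [hp.nodup_iff]
  simp only [hp.mem_iff]
  generalize Q.reverse ++ (P1 ++ P2) = l
  simp only [List.nodup_cons, List.mem_cons]
  constructor
  · rintro ⟨⟨h1, h2, h3⟩, h4⟩
    refine ⟨h3, fun x => ⟨fun hx => ?_, fun hx => ?_⟩⟩
    · have := (h4 x).1 (by simp [hx])
      have : x ≠ 2*m+1 := by rintro rfl; simp [hx] at h1
      have : x ≠ 2*m+2 := by rintro rfl; simp [hx] at h2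
      omega
    · rcases (h4 x).2 (by omega) with h | h | h
      · omega
      · omega
      · exact h
  · rintro ⟨h1, h2⟩
    refine ⟨⟨?_, ?_, h1⟩, fun x => ?_⟩
    · rw [h2]; omega
    · rw [h2]; omega
    · rw [h2]; omega

theorem idx_child {m : ℕ} {P1 P2 Q : List ℕ}
    (hn : (Q.reverse ++ (P1 ++ P2)).Nodup)
    (hmem : ∀ x, x ∈ (Q.reverse ++ (P1 ++ P2)) ↔ x < 2*m+1) :
    (Q.reverse ++ (2*m+1) :: (P1 ++ (2*m+2) :: P2)).idxOf (2*m+1) = Q.length ∧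
    (Q.reverse ++ (2*m+1) :: (P1 ++ (2*m+2) :: P2)).idxOf (2*m+2) = Q.length + P1.length + 1 ∧
    ∀ x, x < 2*m+1 → (x ∈ P1 ↔ Q.length ≤ (Q.reverse ++ (P1 ++ P2)).idxOf x ∧
      (Q.reverse ++ (P1 ++ P2)).idxOf x < Q.length + P1.length) := by
  have h1 := hmem (2*m+1)
  have h2 := hmem (2*m+2)
  simp only [List.mem_append, List.mem_reverse] at h1 h2
  have a1 : 2*m+1 ∉ Q := fun h => by have := h1.1 (.inl h); omega
  have a2 : 2*m+2 ∉ Q := fun h => by have := h2.1 (.inl h); omega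
  have a3 : 2*m+2 ∉ P1 := fun h => by have := h2.1 (.inr (.inl h)); omega
  refine ⟨?_, ?_, ?_⟩
  · simp [List.idxOf_append, a1]
  · simp [List.idxOf_append, List.idxOf_cons, a2, a3]; omega
  · intro x hx
    have hx' := (hmem x).2 hx
    simp only [List.idxOf_append, List.mem_append, List.mem_reverse, List.length_reverse] at *
    by_cases hq : x ∈ Q
    · have := List.idxOf_lt_length_of_mem (List.mem_reverse.2 hq)
      simp only [List.length_reverse] at this
      have hx1 : x ∉ P1 := by
        rw [List.nodup_append] at hn
        intro h
        exact hn.2.2 x (by simpa using hq) x (by simp [h]) rfl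
      simp [hq, hx1]; omega
    · by_cases h1 : x ∈ P1
      · have := List.idxOf_lt_length_of_mem h1
        simp [hq, h1]; omega
      · simp [hq, h1]; omega

theorem valid_child {m : ℕ} {P1 P2 Q : List ℕ} (h : Valid m (P1 ++ P2) Q) (hc : Closed P1) :
    Valid (m+1) ((2*m+2) :: (P1.reverse ++ (2*m+1) :: Q)) P2 := by
  obtain ⟨hn, hmem, hov, hh⟩ := h
  have hch := (nodup_child (m := m) (P1 := P1) (P2 := P2) (Q := Q)).2 ⟨hn, hmem⟩
  obtain ⟨i1, i2, i3⟩ := idx_child hn hmem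
  have hins := ins_lists hn hmem
  have ha : (Q.reverse ++ (P1 ++ P2)).idxOf (2*m) = Q.length := by
    obtain ⟨P', hP'⟩ := hh
    rw [hP'] at hn ⊢
    have : 2*m ∉ Q := by
      rw [List.nodup_append] at hn
      intro h
      exact hn.2.2 (2*m) (by simpa using h) (2*m) (by simp) rfl
    simp [List.idxOf_append, this]
  have hov' := OV.insert hov
    (by
      intro x y hx hy hxy
      exact (List.idxOf_inj ((hmem x).2 hx)).1 hxy) ha (by omega) hins i1 i2
    (by
      intro j hj
      have := i3 (2*j+1) (by omega)
      have := i3 (2*j+2) (by omega)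
      have := hc j
      tauto)
  refine ⟨?_, ?_, ?_, ⟨_, rfl⟩⟩
  · rw [rev_child]; exact List.nodup_reverse.2 hch.1
  · intro x; rw [rev_child, List.mem_reverse]; exact hch.2 x
  · rw [rev_child]
    exact hov'.flip (by omega) (fun x hx => idxOf_rev hch.1 ((hch.2 x).2 hx))

theorem reach_valid {m : ℕ} {P Q : List ℕ} (h : Reach m P Q) : Valid m P Q := by
  induction h with
  | zero =>
    refine ⟨by simp, by simp, ⟨?_, ?_, ?_, ?_⟩, ⟨[], rfl⟩⟩ <;> intro j <;> omega
  | step _ hc ih => exact valid_child ih hc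

theorem closed_app {A B : List ℕ} (hd : (A ++ B).Nodup) (hA : Closed A) :
    Closed (A ++ B) ↔ Closed B := by
  rw [List.nodup_append] at hd
  have hdis : ∀ x, x ∈ A → x ∉ B := fun x h1 h2 => hd.2.2 x h1 x h2 rfl
  simp only [Closed, List.mem_append]
  constructor
  · intro h j
    have := h j; have := hA j; have := hdis (2*j+1); have := hdis (2*j+2); tauto
  · intro h j
    have := h j; have := hA j; tauto

theorem closed_mid {m : ℕ} {P1 : List ℕ} (h1 : 2*m+1 ∉ P1) (h2 : 2*m+2 ∉ P1) (hc : Closed P1) :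
    Closed ((2*m+2) :: (P1.reverse ++ [2*m+1])) := by
  intro j
  have := hc j
  by_cases hj : j = m
  · subst hj; simp
  · have e1 : ¬ (2*j+1 = 2*m+2) := by omega
    have e2 : ¬ (j = m) := hj
    have e3 : ¬ (2*j+2 = 2*m+1) := by omega
    simp [e2, e3, this]
    omega

theorem reach_notMem {m : ℕ} {P Q : List ℕ} (h : Reach m P Q) {x : ℕ} (hx : 2*m+1 ≤ x) :
    x ∉ P ∧ x ∉ Q := by
  have := (reach_valid h).mem x
  simp only [List.mem_append, List.mem_reverse] at this
  constructor <;> intro h <;> have := this.1 (by simp [h]) <;> omega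

theorem reach_nodup {m : ℕ} {P Q : List ℕ} (h : Reach m P Q) : P.Nodup ∧ Q.Nodup := by
  have := (reach_valid h).nodup
  rw [List.nodup_append] at this
  exact ⟨this.2.1, by simpa using this.1⟩

theorem child_prefix {m : ℕ} {P1 P2 Q : List ℕ} (h : Reach m (P1 ++ P2) Q) (hc : Closed P1)
    {A B : List ℕ} (hAB : A ++ B = (2*m+2) :: (P1.reverse ++ (2*m+1) :: Q)) (hA : Closed A)
    (hne : A ≠ []) : ∃ Q1, A = (2*m+2) :: (P1.reverse ++ [2*m+1]) ++ Q1 ∧ Q1 ++ B = Q ∧ Closed Q1 := by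
  obtain ⟨p1, q1⟩ := reach_notMem h (x := 2*m+1) le_rfl
  obtain ⟨p2, q2⟩ := reach_notMem h (x := 2*m+2) (by omega)
  simp only [List.mem_append, not_or] at p1 p2
  obtain ⟨a, A', rfl⟩ := List.exists_cons_of_ne_nil hne
  simp only [List.cons_append, List.cons.injEq] at hAB
  obtain ⟨rfl, hAB⟩ := hAB
  have hm : 2*m+1 ∈ A' := by
    have := (hA m).2 (by simp)
    simpa using this
  obtain ⟨U, W, rfl⟩ := List.append_of_mem hm
  have hn := (reach_nodup (Reach.step h hc)).1
  rw [← hAB] at hn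
  have hU : U = P1.reverse ∧ W ++ B = Q := by
    have e : U ++ (2*m+1) :: (W ++ B) = P1.reverse ++ (2*m+1) :: Q := by simpa using hAB
    have hu : 2*m+1 ∉ U := by
      simp only [List.append_assoc, List.cons_append, List.nodup_cons] at hn
      have := hn.2
      rw [List.nodup_append] at this
      intro h
      exact this.2.2 _ h _ (by simp) rfl
    have i1 : (U ++ (2*m+1) :: (W ++ B)).idxOf (2*m+1) = U.length := by simp [List.idxOf_append, hu]
    have i2 : (P1.reverse ++ (2*m+1) :: Q).idxOf (2*m+1) = P1.reverse.length := by
      simp [List.idxOf_append, p1.1]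
    have := List.append_inj e (by rw [← i1, ← i2, e])
    exact ⟨this.1, by simpa using this.2⟩
  obtain ⟨rfl, hW⟩ := hU
  refine ⟨W, by simp, hW, ?_⟩
  have e : (2*m+2) :: (P1.reverse ++ (2*m+1) :: W) = (2*m+2) :: (P1.reverse ++ [2*m+1]) ++ W := by simp
  rw [e] at hA
  refine (closed_app ?_ (closed_mid p1.1 p2.1 hc)).1 hA
  refine hn.sublist ?_
  rw [← e]
  simp

/-- the key invariant -/
theorem reach_inv {m : ℕ} {P Q : List ℕ} (h : Reach m P Q) :
    (∀ A x B, P = A ++ x :: B → Closed A → ((x+1)/2) % 2 = m % 2) ∧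
    (∀ A x B, Q = A ++ x :: B → Closed A → ((x+1)/2) % 2 = (m+1) % 2) := by
  induction h with
  | zero =>
    constructor
    · intro A x B h _
      have : x ∈ [0] := by rw [h]; simp
      simp at this; subst this; rfl
    · intro A x B h; simp at h
  | @step m P1 P2 Q hr hc ih =>
    constructor
    · intro A x B h hA
      by_cases hne : A = []
      · subst hne
        simp at h
        omega
      · obtain ⟨Q1, _, h2, h3⟩ := child_prefix hr hc h.symm hA hne
        exact ih.2 Q1 x B h2.symm h3
    · intro A x B h hA
      have hn := (reach_nodup hr).1
      have := ih.1 (P1 ++ A) x B (by simp [h]) ((closed_app (by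
        rw [h, ← List.append_assoc, List.nodup_append] at hn; exact hn.1) hc).2 hA)
      omega

theorem valid_reach : ∀ {m : ℕ} {P Q : List ℕ}, Valid m P Q → Reach m P Q := by
  intro m
  induction m with
  | zero =>
    rintro P Q ⟨hn, hmem, -, P', rfl⟩
    have hl := len_of hn hmem
    simp only [List.length_append, List.length_reverse, List.length_cons] at hl
    have h1 : Q = [] := List.length_eq_zero_iff.1 (by omega)
    have h2 : P' = [] := List.length_eq_zero_iff.1 (by omega)
    subst h1 h2
    exact Reach.zero
  | succ m ih =>
    rintro P' P2 ⟨hn, hmem, hov, P'', rfl⟩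
    have hO : 2*m+1 ∈ P'' := by
      have h1 := (hmem (2*m+1)).2 (by omega)
      have h2 := hov.hi m (by omega) (by omega)
      have h3 : 2*m+2 ∉ P2.reverse := by
        rw [List.nodup_append] at hn
        intro h
        exact hn.2.2 _ h (2*(m+1)) (by simp) rfl
      simp only [List.mem_append, List.mem_cons] at h1
      rcases h1 with h1 | h1 | h1
      · have := List.idxOf_lt_length_of_mem h1
        simp only [List.idxOf_append, h1, h3, if_true, if_false] at h2
        omega
      · omega
      · exact h1
    obtain ⟨A, Q, rfl⟩ := List.append_of_mem hO
    obtain ⟨P1, rfl⟩ : ∃ P1 : List ℕ, A = P1.reverse := ⟨A.reverse, by simp⟩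
    have e : 2 * (m+1) = 2*m+2 := by ring
    rw [e, rev_child] at hn hov
    simp only [e] at hmem
    simp only [rev_child] at hmem
    have hn' := List.nodup_reverse.1 hn
    have hmem' : ∀ x, x ∈ (Q.reverse ++ (2*m+1) :: (P1 ++ (2*m+2) :: P2)) ↔ x < 2*(m+1)+1 := by
      intro x; rw [← List.mem_reverse, hmem]; omega
    obtain ⟨hn0, hmem0⟩ := nodup_child.1 ⟨hn', hmem'⟩
    have hov' := hov.flip (t := m) (by omega) (fun x hx => idxOf_rev hn ((hmem x).2 (by omega)))
    rw [List.reverse_reverse] at hov'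
    obtain ⟨i1, i2, i3⟩ := idx_child hn0 hmem0
    have hins := ins_lists hn0 hmem0
    obtain ⟨hov0, hge, hcl⟩ := hov'.restrict (by omega) hins i1 i2
    obtain ⟨X, Y, hXY⟩ := List.append_of_mem ((hmem0 (2*m)).2 (by omega))
    have hv : Valid m ((2*m) :: Y) X.reverse := by
      refine ⟨?_, ?_, ?_, ⟨_, rfl⟩⟩
      · rw [List.reverse_reverse, ← hXY]; exact hn0
      · rw [List.reverse_reverse, ← hXY]; exact hmem0
      · rw [List.reverse_reverse, ← hXY]; exact hov0
    have hr := ih hv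
    have hnX : 2*m ∉ X := by
      rw [hXY, List.nodup_append] at hn0
      intro h
      exact hn0.2.2 _ h (2*m) (by simp) rfl
    have hf : (Q.reverse ++ (P1 ++ P2)).idxOf (2*m) = X.length := by
      rw [hXY]; simp [List.idxOf_append, hnX]
    have hlen : X.length = Q.length := by
      by_contra hne
      have hlt : Q.length < X.length := by
        simp only [hf] at hge; omega
      rcases List.eq_nil_or_concat X with hX | ⟨X0, x, hX⟩
      · simp [hX] at hlt
      · rw [List.concat_eq_append] at hX
        have hinv := (reach_inv hr).2 [] x X0.reverse (by simp [hX]) (by intro j; simp)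
        have hxl : x ∈ Q.reverse ++ (P1 ++ P2) := by rw [hXY, hX]; simp
        have hfx : (Q.reverse ++ (P1 ++ P2)).idxOf x = X.length - 1 := by
          rw [hXY, hX]
          rw [hXY, hX, List.append_assoc, List.nodup_append] at hn0
          have : x ∉ X0 := fun h => hn0.2.2 _ h x (by simp) rfl
          simp [List.idxOf_append, this]
        have hx := (hmem0 x).1 hxl
        have hx2 : x ≠ 2*m := by
          rintro rfl; omega
        obtain ⟨j, hj⟩ : ∃ j, j = x/2 := ⟨_, rfl⟩
        have hxm : j < m := by omega
        have hnc := hov'.nc1 m (j) (by omega) (by omega) (by omega)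
        have g0 := hins (2*m) (by omega)
        have g1 := hins (2*(j)) (by omega)
        have g2 := hins (2*(j)+1) (by omega)
        have hne' : ∀ y, y < 2*m → (Q.reverse ++ (P1 ++ P2)).idxOf y ≠ X.length := by
          intro y hy hh
          rw [← hf] at hh
          have := (List.idxOf_inj ((hmem0 y).2 (by omega))).1 hh
          omega
        have n1 := hne' (2*(j)) (by omega)
        have n2 := hne' (2*(j)+1) (by omega)
        simp only [SB] at hnc
        simp only [i1] at hnc
        rcases Nat.mod_two_eq_zero_or_one x with hj2 | hj2
        · have hj3 : x = 2*j := by omega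
          have h2 := hov0.hi j hxm (by omega)
          rw [hj3] at hfx
          simp only at *
          omega
        · have hj3 : x = 2*j+1 := by omega
          have h2 := hov0.lo j hxm (by omega)
          rw [hj3] at hfx
          simp only at *
          omega
    obtain ⟨hX, hY⟩ := List.append_inj hXY (by simp [hlen])
    rw [← hX, ← hY, List.reverse_reverse] at hr
    refine Reach.step hr ?_
    intro j
    by_cases hj : j < m
    · rw [i3 (2*j+1) (by omega), i3 (2*j+2) (by omega)]
      exact hcl j hj
    · have h1 := hmem0 (2*j+1)
      have h2 := hmem0 (2*j+2)
      simp only [List.mem_append] at h1 h2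
      constructor
      · intro h; have := h1.1 (by simp [h]); omega
      · intro h; have := h2.1 (by simp [h]); omega

end Fold

namespace Fold

open Finset

/-- Catalan generating tree numbers -/
noncomputable def G (n p : ℕ) : ℕ := PowerSeries.coeff n (PowerSeries.catalanSeries ^ p)

theorem G_zero (p : ℕ) : G 0 p = 1 := by
  simp [G]

theorem G_succ (n p : ℕ) : G (n+1) p = ∑ k ∈ range p, G n (k+2) := by
  induction p with
  | zero => simp [G, PowerSeries.coeff_one]
  | succ p ih =>
    rw [sum_range_succ, ← ih]
    have : PowerSeries.catalanSeries ^ (p+1) =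
        PowerSeries.catalanSeries ^ (p+2) * PowerSeries.X + PowerSeries.catalanSeries ^ p := by
      conv_lhs => rw [pow_succ]
      conv_lhs => rhs; rw [← PowerSeries.catalanSeries_sq_mul_X_add_one]
      ring
    simp only [G]
    rw [this, map_add, PowerSeries.coeff_succ_mul_X, add_comm]

theorem G_one (n : ℕ) : G n 1 = catalan n := by simp [G]

theorem G_two (n : ℕ) : G n 2 = catalan (n+1) := by
  rw [← G_one, G_succ]; simp

/-- number of descendants after `r` steps of a state with labels `p, q` -/
def F : ℕ → ℕ → ℕ → ℕ
  | 0, _, _ => 1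
  | r+1, p, q => ∑ k ∈ range p, F r (q+1) (k+1)

theorem F_even (n : ℕ) : ∀ p q, F (2*n) p q = G n p * G n (q+1) := by
  induction n with
  | zero => intro p q; simp [F, G_zero]
  | succ n ih =>
    intro p q
    have e : 2 * (n+1) = (2*n+1)+1 := by ring
    rw [e]
    simp only [F, ih]
    rw [G_succ, G_succ, sum_mul_sum]

theorem F_odd (n p q : ℕ) : F (2*n+1) p q = G (n+1) p * G n (q+1) := by
  simp only [F, F_even]
  rw [G_succ, ← mul_sum, mul_comm]

theorem F_final (m : ℕ) : F m 2 1 = catalan (m/2+1) * catalan ((m+1)/2+1) := by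
  rcases Nat.even_or_odd' m with ⟨n, rfl | rfl⟩
  · rw [F_even]
    have e1 : 2*n/2 = n := by omega
    have e2 : (2*n+1)/2 = n := by omega
    rw [e1, e2, G_two]
  · rw [F_odd]
    have e1 : (2*n+1)/2 = n := by omega
    have e2 : (2*n+1+1)/2 = n+1 := by omega
    rw [e1, e2, G_two, G_two, mul_comm]

open Classical in
/-- lengths of the closed prefixes -/
noncomputable def cs (P : List ℕ) : Finset ℕ :=
  (range (P.length + 1)).filter (fun k => Closed (P.take k))

theorem mem_cs {P : List ℕ} {k : ℕ} : k ∈ cs P ↔ k ≤ P.length ∧ Closed (P.take k) := by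
  simp [cs]

theorem sum_rank (φ : ℕ → ℕ) (s : Finset ℕ) :
    ∑ k ∈ s, φ (#{x ∈ s | k ≤ x}) = ∑ i ∈ range #s, φ (i+1) := by
  induction s using Finset.induction_on_min with
  | empty => simp
  | insert a s ha ih =>
    have hn : a ∉ s := fun h => lt_irrefl _ (ha a h)
    rw [sum_insert hn, card_insert_of_notMem hn, sum_range_succ, ← ih, add_comm]
    congr 1
    · refine sum_congr rfl fun k hk => ?_
      congr 2
      rw [filter_insert, if_neg]
      exact not_le.2 (ha k hk)
    · congr 1
      rw [filter_true_of_mem, card_insert_of_notMem hn]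
      intro x hx
      rcases mem_insert.1 hx with rfl | hx
      · exact le_rfl
      · exact (ha x hx).le

theorem card_cs_drop {P : List ℕ} (hP : P.Nodup) {k : ℕ} (hk : k ∈ cs P) :
    #(cs (P.drop k)) = #{x ∈ cs P | k ≤ x} := by
  rw [mem_cs] at hk
  have key : ∀ j, Closed (P.take (k+j)) ↔ Closed ((P.drop k).take j) := by
    intro j
    rw [List.take_add]
    refine closed_app ?_ hk.2
    rw [← List.take_add]
    exact hP.sublist (List.take_sublist _ _)
  refine card_bij (fun j _ => k + j) ?_ ?_ ?_
  · intro j hj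
    rw [mem_cs] at hj
    simp only [mem_filter, mem_cs, key]
    have := hj.1
    rw [List.length_drop] at this
    exact ⟨⟨by omega, hj.2⟩, by omega⟩
  · intro a _ b _ h
    simpa using h
  · intro x hx
    simp only [mem_filter, mem_cs] at hx
    refine ⟨x - k, ?_, by omega⟩
    rw [mem_cs, ← key, List.length_drop]
    have e : k + (x - k) = x := by omega
    rw [e]
    exact ⟨by omega, hx.1.2⟩

theorem card_cs_child {m : ℕ} {P1 P2 Q : List ℕ} (h : Reach m (P1 ++ P2) Q) (hc : Closed P1) :
    #(cs ((2*m+2) :: (P1.reverse ++ (2*m+1) :: Q))) = #(cs Q) + 1 := by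
  have hn := (reach_nodup (Reach.step h hc)).1
  obtain ⟨p1, q1⟩ := reach_notMem h (x := 2*m+1) le_rfl
  obtain ⟨p2, q2⟩ := reach_notMem h (x := 2*m+2) (by omega)
  simp only [List.mem_append, not_or] at p1 p2
  have hlen : ((2*m+2) :: (P1.reverse ++ [2*m+1])).length = P1.length + 2 := by simp
  have e : (2*m+2) :: (P1.reverse ++ (2*m+1) :: Q) = (2*m+2) :: (P1.reverse ++ [2*m+1]) ++ Q := by simp
  have hmid := closed_mid p1.1 p2.1 hc
  have : cs ((2*m+2) :: (P1.reverse ++ (2*m+1) :: Q)) =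
      insert 0 ((cs Q).image (fun j => P1.length + 2 + j)) := by
    ext k
    rw [mem_insert, mem_image]
    constructor
    · intro hk
      rw [mem_cs] at hk
      by_cases h0 : k = 0
      · exact .inl h0
      · right
        obtain ⟨Q1, h1, h2, h3⟩ := child_prefix h hc (List.take_append_drop k _) hk.2 (by
          intro h; simp at h; exact h0 h)
        have hl : k = P1.length + 2 + Q1.length := by
          rw [← hlen, ← List.length_append, ← h1, List.length_take]; omega
        refine ⟨Q1.length, ?_, hl.symm⟩
        rw [mem_cs, ← h2]
        simp [h3]
    · rintro (rfl | ⟨j, hj, rfl⟩)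
      · rw [mem_cs]; simp [Closed]
      · rw [mem_cs] at hj ⊢
        refine ⟨by simp; omega, ?_⟩
        rw [e] at hn ⊢
        rw [← hlen, List.take_length_add_append]
        refine (closed_app ?_ hmid).2 hj.2
        exact hn.sublist (List.Sublist.append_left (List.take_sublist _ _) _)
  rw [this, card_insert_of_notMem, card_image_of_injective]
  · intro a b h; simpa using h
  · simp

/-- the child of a state given by a prefix length -/
def child (m : ℕ) (t : (_ : List ℕ × List ℕ) × ℕ) : List ℕ × List ℕ :=
  ((2*m+2) :: ((t.1.1.take t.2).reverse ++ (2*m+1) :: t.1.2), t.1.1.drop t.2)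

/-- all states at stage `m` -/
noncomputable def T : ℕ → Finset (List ℕ × List ℕ)
  | 0 => {([0], [])}
  | m+1 => ((T m).sigma (fun s => cs s.1)).image (child m)

theorem mem_T {m : ℕ} : ∀ {P Q : List ℕ}, (P, Q) ∈ T m ↔ Reach m P Q := by
  induction m with
  | zero =>
    intro P Q
    simp only [T, mem_singleton, Prod.mk.injEq]
    constructor
    · rintro ⟨rfl, rfl⟩; exact Reach.zero
    · intro h; cases h; simp
  | succ m ih =>
    intro P Q
    simp only [T, mem_image, mem_sigma]
    constructor
    · rintro ⟨⟨⟨P0, Q0⟩, k⟩, ⟨h1, h2⟩, h3⟩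
      rw [ih] at h1
      simp only [mem_cs] at h2
      simp only [child, Prod.mk.injEq] at h3
      obtain ⟨rfl, rfl⟩ := h3
      refine Reach.step ?_ h2.2
      rwa [List.take_append_drop]
    · intro h
      cases h with
      | @step _ P1 P2 Q0 hr hc =>
        refine ⟨⟨(P1 ++ Q, Q0), P1.length⟩, ⟨ih.2 hr, ?_⟩, ?_⟩
        · rw [mem_cs]; simp [hc]
        · simp [child]

theorem child_inj (m : ℕ) : Set.InjOn (child m) ((T m).sigma (fun s => cs s.1) : Finset _) := by
  rintro ⟨⟨P, Q⟩, k⟩ h ⟨⟨P', Q'⟩, k'⟩ h' heq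
  simp only [coe_sigma, Set.mem_sigma_iff, mem_coe, mem_T, mem_cs] at h h'
  obtain ⟨hr, hk, -⟩ := h
  obtain ⟨hr', hk', -⟩ := h'
  simp only [child, Prod.mk.injEq, List.cons.injEq, true_and] at heq
  obtain ⟨e, e2⟩ := heq
  have a1 : 2*m+1 ∉ (P.take k) := fun h =>
    (reach_notMem hr (x := 2*m+1) le_rfl).1 (List.mem_of_mem_take h)
  have a2 : 2*m+1 ∉ (P'.take k') := fun h =>
    (reach_notMem hr' (x := 2*m+1) le_rfl).1 (List.mem_of_mem_take h)
  have i1 : ((P.take k).reverse ++ (2*m+1) :: Q).idxOf (2*m+1) = (P.take k).reverse.length := by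
    simp [List.idxOf_append, a1]
  have i2 : ((P'.take k').reverse ++ (2*m+1) :: Q').idxOf (2*m+1) = (P'.take k').reverse.length := by
    simp [List.idxOf_append, a2]
  have hl : (P.take k).reverse.length = (P'.take k').reverse.length := by rw [← i1, ← i2, e]
  obtain ⟨e3, e4⟩ := List.append_inj e hl
  have e5 := List.reverse_injective e3
  have hkk : k = k' := by
    simp only [List.length_reverse, List.length_take] at hl; omega
  have hP : P = P' := by
    rw [← List.take_append_drop k P, ← List.take_append_drop k' P', e5, e2]
  have hQ : Q = Q' := by simpa using e4
  subst hkk hP hQ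
  rfl

theorem sum_T (m : ℕ) : ∀ r, ∑ s ∈ T m, F r #(cs s.1) #(cs s.2) = F (m + r) 2 1 := by
  induction m with
  | zero =>
    intro r
    have c1 : cs [0] = {0, 1} := by
      ext k
      rw [mem_cs]
      have h0 : Closed [] := by simp [Closed]
      have h1 : Closed [0] := by simp [Closed]
      simp only [List.length_singleton, mem_insert, mem_singleton]
      constructor
      · omega
      · rintro (rfl | rfl) <;> simp [h0, h1]
    have c2 : cs [] = {0} := by
      ext k
      rw [mem_cs]
      have h0 : Closed [] := by simp [Closed]
      simp [h0]
    simp [T, c1, c2]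
  | succ m ih =>
    intro r
    have e : m + 1 + r = m + (r+1) := by ring
    rw [e, ← ih (r+1), T, sum_image (child_inj m), sum_sigma]
    refine sum_congr rfl ?_
    rintro ⟨P, Q⟩ hs
    rw [mem_T] at hs
    simp only [F]
    rw [← sum_rank (fun i => F r (#(cs Q) + 1) i)]
    refine sum_congr rfl fun k hk => ?_
    simp only [child]
    rw [card_cs_drop (reach_nodup hs).1 hk]
    rw [card_cs_child (P2 := P.drop k) (by rwa [List.take_append_drop]) (mem_cs.1 hk).2]

theorem card_T (m : ℕ) : #(T m) = catalan (m/2+1) * catalan ((m+1)/2+1) := by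
  have := sum_T m 0
  simp only [F, add_zero, F_final] at this
  simpa using this

end Fold

namespace Fold

open Finset

theorem sb_iff (x a b : ℕ) : StrictlyBetween x a b ↔ SB x a b := by
  simp only [StrictlyBetween, SB]; omega

theorem nxor {p q : Prop} : ¬ Xor' p q ↔ (p ↔ q) := by
  unfold Xor' Xor; tauto

theorem valid_iff (m : ℕ) (σ : Equiv.Perm (Fin (2*m+1))) :
    ValidLayerOrdering (2*m+1) twoAlt σ ↔ OV m 0 (faceVal σ) := by
  have hc0 : ∀ j, ((twoAlt (2*j) = MV.M ∧ Even (2*j)) ∨ (twoAlt (2*j) = MV.V ∧ Odd (2*j))) ↔ j % 2 = 0 := by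
    intro j
    have e : 2*j/2 = j := by omega
    have h1 : Even (2*j) := by simp
    have h2 : ¬ Odd (2*j) := by simp
    by_cases hj : Even j
    · simp [twoAlt, e, hj, Nat.even_iff.1 hj]
    · simp [twoAlt, e, hj, Nat.odd_iff.1 (Nat.not_even_iff_odd.1 hj)]
  have hc1 : ∀ j, ((twoAlt (2*j+1) = MV.M ∧ Even (2*j+1)) ∨ (twoAlt (2*j+1) = MV.V ∧ Odd (2*j+1))) ↔ j % 2 = 1 := by
    intro j
    have e : (2*j+1)/2 = j := by omega
    have h1 : Odd (2*j+1) := by simp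
    have h2 : ¬ Even (2*j+1) := by simp
    by_cases hj : Even j
    · simp [twoAlt, e, hj, h2, Nat.even_iff.1 hj]
    · simp [twoAlt, e, hj, h1, Nat.odd_iff.1 (Nat.not_even_iff_odd.1 hj)]
  constructor
  · rintro ⟨h1, h2⟩
    refine ⟨?_, ?_, ?_, ?_⟩
    · intro j hj hp
      have a := h1 (2*j) (by omega)
      have b := h1 (2*j+1) (by omega)
      rw [if_pos ((hc0 j).2 (by omega))] at a
      rw [if_neg (by rw [hc1]; omega)] at b
      exact ⟨a, b⟩
    · intro j hj hp
      have a := h1 (2*j) (by omega)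
      have b := h1 (2*j+1) (by omega)
      rw [if_neg (by rw [hc0]; omega)] at a
      rw [if_pos ((hc1 j).2 (by omega))] at b
      exact ⟨a, b⟩
    · intro i j hi hj _
      have := h2 (2*i) (2*j) (by omega) (by omega) (by omega)
      rwa [nxor, sb_iff, sb_iff] at this
    · intro i j hi hj _
      have := h2 (2*i+1) (2*j+1) (by omega) (by omega) (by omega)
      rwa [nxor, sb_iff, sb_iff] at this
  · intro h
    constructor
    · intro i hi
      rcases Nat.even_or_odd' i with ⟨j, rfl | rfl⟩
      · split_ifs with hh
        · exact (h.lo j (by omega) (by rw [hc0] at hh; omega)).1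
        · exact (h.hi j (by omega) (by rw [hc0] at hh; omega)).1
      · split_ifs with hh
        · exact (h.hi j (by omega) (by rw [hc1] at hh; omega)).2
        · exact (h.lo j (by omega) (by rw [hc1] at hh; omega)).2
    · intro i j hi hj hij
      rw [nxor, sb_iff, sb_iff]
      by_cases e : i = j
      · subst e
        simp only [SB]; omega
      rcases Nat.even_or_odd' i with ⟨i, rfl | rfl⟩
      · obtain ⟨k, rfl⟩ : ∃ k, j = 2*k := ⟨j/2, by omega⟩
        exact h.nc1 i k (by omega) (by omega) (by omega)
      · obtain ⟨k, rfl⟩ : ∃ k, j = 2*k+1 := ⟨j/2, by omega⟩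
        exact h.nc2 i k (by omega) (by omega) (by omega)

theorem faceVal_lt {m x : ℕ} (σ : Equiv.Perm (Fin (2*m+1))) (hx : x < 2*m+1) :
    faceVal σ x = (σ ⟨x, hx⟩ : ℕ) := by simp [faceVal, hx]

theorem faceVal_rev {m x : ℕ} (σ : Equiv.Perm (Fin (2*m+1))) (hx : x < 2*m+1) :
    faceVal σ x ≤ 2*m ∧ faceVal (Fin.revPerm * σ) x = 2*m - faceVal σ x := by
  rw [faceVal_lt _ hx, faceVal_lt _ hx]
  refine ⟨by omega, ?_⟩
  simp [Fin.val_rev]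

theorem OV.congr_parity {m s t : ℕ} {f : ℕ → ℕ} (h : OV m s f) (hst : s % 2 = t % 2) : OV m t f :=
  ⟨fun j hj hp => h.lo j hj (by omega), fun j hj hp => h.hi j hj (by omega), h.nc1, h.nc2⟩

theorem OV.congr_fun {m s : ℕ} {f g : ℕ → ℕ} (h : OV m s f) (hfg : ∀ x, x < 2*m+1 → g x = f x) :
    OV m s g := by
  constructor
  · intro j hj hp
    rw [hfg _ (by omega), hfg _ (by omega), hfg _ (by omega)]
    exact h.lo j hj hp
  · intro j hj hp
    rw [hfg _ (by omega), hfg _ (by omega), hfg _ (by omega)]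
    exact h.hi j hj hp
  · intro i j hi hj hij
    rw [hfg (2*j) (by omega), hfg (2*j+1) (by omega), hfg (2*i) (by omega), hfg (2*i+1) (by omega)]
    exact h.nc1 i j hi hj hij
  · intro i j hi hj hij
    rw [hfg (2*j+1) (by omega), hfg (2*j+2) (by omega), hfg (2*i+1) (by omega), hfg (2*i+2) (by omega)]
    exact h.nc2 i j hi hj hij

theorem card_orient (m : ℕ) :
    Nat.card {σ : Equiv.Perm (Fin (2*m+1)) // OV m 0 (faceVal σ)} =
    Nat.card {σ : Equiv.Perm (Fin (2*m+1)) // OV m m (faceVal σ)} := by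
  rcases Nat.mod_two_eq_zero_or_one m with hm | hm
  · refine Nat.card_congr (Equiv.subtypeEquivRight fun σ => ?_)
    exact ⟨fun h => h.congr_parity (by omega), fun h => h.congr_parity (by omega)⟩
  · refine Nat.card_congr (Equiv.subtypeEquiv (Equiv.mulLeft Fin.revPerm) fun σ => ?_)
    constructor
    · intro h
      exact h.flip (by omega) (fun x hx => faceVal_rev σ hx)
    · intro h
      refine h.flip (N := 2*m) (by omega) (fun x hx => ?_)
      have := faceVal_rev σ hx
      simp only [Equiv.coe_mulLeft]
      omega

/-- valid folding lists -/
def FL (m : ℕ) : Set (List ℕ) :=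
  {l | l.Nodup ∧ (∀ x, x ∈ l ↔ x < 2*m+1) ∧ OV m m (fun x => l.idxOf x)}

theorem card_FL_T (m : ℕ) : Nat.card (FL m) = #(T m) := by
  have hT : Nat.card (T m) = #(T m) := by simp
  rw [← hT]
  symm
  have hmem : ∀ s : T m, s.1.2.reverse ++ s.1.1 ∈ FL m := by
    rintro ⟨⟨P, Q⟩, hs⟩
    have := reach_valid (mem_T.1 hs)
    exact ⟨this.nodup, this.mem, this.ov⟩
  refine Nat.card_eq_of_bijective (fun s : T m => (⟨s.1.2.reverse ++ s.1.1, hmem s⟩ : FL m)) ⟨?_, ?_⟩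
  · rintro ⟨⟨P, Q⟩, hs⟩ ⟨⟨P', Q'⟩, hs'⟩ h
    simp only [Subtype.mk.injEq] at h
    have v := reach_valid (mem_T.1 hs)
    have v' := reach_valid (mem_T.1 hs')
    have key : ∀ P Q, Valid m P Q → (Q.reverse ++ P).idxOf (2*m) = Q.reverse.length := by
      rintro P Q ⟨hn, -, -, P0, rfl⟩
      have : 2*m ∉ Q := by
        rw [List.nodup_append] at hn
        intro h
        exact hn.2.2 (2*m) (by simpa using h) (2*m) (by simp) rfl
      simp [List.idxOf_append, this]
    obtain ⟨e1, e2⟩ := List.append_inj h (by rw [← key P Q v, ← key P' Q' v', h])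
    have := List.reverse_injective e1
    subst e2 this
    rfl
  · rintro ⟨l, h1, h2, h3⟩
    obtain ⟨X, Y, rfl⟩ := List.append_of_mem ((h2 (2*m)).2 (by omega))
    refine ⟨⟨((2*m) :: Y, X.reverse), mem_T.2 (valid_reach ⟨?_, ?_, ?_, ⟨_, rfl⟩⟩)⟩, ?_⟩
    · simpa only [List.reverse_reverse] using h1
    · simpa only [List.reverse_reverse] using h2
    · simpa only [List.reverse_reverse] using h3
    · simp

/-- the list of faces in layer order -/
def toList {m : ℕ} (σ : Equiv.Perm (Fin (2*m+1))) : List ℕ := List.ofFn (fun k => (σ.symm k : ℕ))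

theorem toList_nodup {m : ℕ} (σ : Equiv.Perm (Fin (2*m+1))) : (toList σ).Nodup := by
  rw [toList, List.nodup_ofFn]
  intro a b h
  exact σ.symm.injective (Fin.ext h)

theorem mem_toList {m : ℕ} (σ : Equiv.Perm (Fin (2*m+1))) (x : ℕ) : x ∈ toList σ ↔ x < 2*m+1 := by
  rw [toList, List.mem_ofFn]
  constructor
  · rintro ⟨k, rfl⟩; exact (σ.symm k).2
  · intro h; exact ⟨σ ⟨x, h⟩, by simp⟩

theorem idxOf_toList {m : ℕ} (σ : Equiv.Perm (Fin (2*m+1))) (x : ℕ) (hx : x < 2*m+1) :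
    (toList σ).idxOf x = faceVal σ x := by
  rw [faceVal_lt _ hx]
  have hl : (σ ⟨x, hx⟩ : ℕ) < (toList σ).length := by
    rw [toList, List.length_ofFn]; exact (σ ⟨x, hx⟩).2
  rw [← (toList_nodup σ).idxOf_getElem _ hl]
  congr 1
  simp only [toList, List.getElem_ofFn, Fin.eta, Equiv.symm_apply_apply]

theorem card_perm_FL (m : ℕ) :
    Nat.card {σ : Equiv.Perm (Fin (2*m+1)) // OV m m (faceVal σ)} = Nat.card (FL m) := by
  have hmem : ∀ s : {σ : Equiv.Perm (Fin (2*m+1)) // OV m m (faceVal σ)}, toList s.1 ∈ FL m := by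
    rintro ⟨σ, hs⟩
    exact ⟨toList_nodup σ, mem_toList σ, hs.congr_fun (fun x hx => idxOf_toList σ x hx)⟩
  refine Nat.card_eq_of_bijective
    (fun s : {σ : Equiv.Perm (Fin (2*m+1)) // OV m m (faceVal σ)} => (⟨toList s.1, hmem s⟩ : FL m)) ⟨?_, ?_⟩
  · rintro ⟨σ, hs⟩ ⟨τ, ht⟩ h
    simp only [Subtype.mk.injEq] at h ⊢
    have h2 := List.ofFn_injective h
    apply Equiv.symm_bijective.injective
    ext k
    exact congrFun h2 k
  · rintro ⟨l, h1, h2, h3⟩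
    have hl : l.length = 2*m+1 := len_of h1 h2
    let g : Fin (2*m+1) → Fin (2*m+1) := fun k =>
      ⟨l[(k : ℕ)]'(by omega), (h2 _).1 (List.getElem_mem _)⟩
    have hg : Function.Injective g := by
      intro a b h
      have := congrArg Fin.val h
      exact Fin.ext ((h1.getElem_inj_iff).1 this)
    let σ : Equiv.Perm (Fin (2*m+1)) := (Equiv.ofBijective g (Finite.injective_iff_bijective.1 hg)).symm
    have hσ : toList σ = l := by
      apply List.ext_getElem
      · simp [toList, hl]
      · intro i hi hi'
        simp only [toList, List.getElem_ofFn, σ, g, Equiv.symm_symm, Equiv.ofBijective_apply]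
    refine ⟨⟨σ, ?_⟩, ?_⟩
    · refine h3.congr_fun (fun x hx => ?_)
      rw [← idxOf_toList σ x hx, hσ]
    · exact Subtype.ext hσ

theorem foldCount_eq (m : ℕ) : foldCount (2*m+1) twoAlt = #(T m) := by
  rw [← card_FL_T, ← card_perm_FL, ← card_orient, foldCount]
  exact Nat.card_congr (Equiv.subtypeEquivRight fun σ => valid_iff m σ)

end Fold

/-- Theorem: for `m ≥ 1`, the 2-alternating assignment with `m` blocks on the
`1 × (2m+1)` strip folds in `C_{⌊m/2⌋+1} · C_{⌈m/2⌉+1}` ways. -/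
theorem stmt5 (m : ℕ) (hm : 1 ≤ m) :
    foldCount (2 * m + 1) twoAlt =
      catalan (m / 2 + 1) * catalan ((m + 1) / 2 + 1) := by
  rw [Fold.foldCount_eq, Fold.card_T]
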